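/- arXiv:1612.08476 — 2 statements merged into one kernel-verified Lean document; each statement's English description precedes it below -/
import Mathlib

section
/- Let (E, A, ⟨·,·⟩) be a full basic triple such that E with the associated ternary product is an admissible *-tring and E is a faithful A-module. Let γ be a C*-seminorm on E and define γ^r(a) := sup{γ(xa) : x ∈ E, γ(x) ≤ 1} for a ∈ A. Then γ^r(a) is finite for every a ∈ A, γ^r is a C*-seminorm on A, and the following hold for all x,y ∈ E and a ∈ A: γ(xa) ≤ γ(x)γ^r(a); γ^r(⟨x,y⟩) ≤ γ(x)γ(y); γ(x)² = γ^r(⟨x,x⟩). Moreover γ^r is a norm if and only if γ is a norm. -/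
noncomputable section

open scoped ComplexConjugate

/-- The axioms of a `*`-ternary ring (`*`-tring) structure on a complex vector
space: `μ` is linear in the odd variables, conjugate-linear in the middle one,
and satisfies the ternary associativity identities. -/
def IsTernaryProduct {E : Type*} [AddCommGroup E] [Module ℂ E]
    (μ : E → E → E → E) : Prop :=
  (∀ x x' y z : E, μ (x + x') y z = μ x y z + μ x' y z) ∧
  (∀ (c : ℂ) (x y z : E), μ (c • x) y z = c • μ x y z) ∧
  (∀ x y y' z : E, μ x (y + y') z = μ x y z + μ x y' z) ∧
  (∀ (c : ℂ) (x y z : E), μ x (c • y) z = conj c • μ x y z) ∧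
  (∀ x y z z' : E, μ x y (z + z') = μ x y z + μ x y z') ∧
  (∀ (c : ℂ) (x y z : E), μ x y (c • z) = c • μ x y z) ∧
  (∀ x y z u v : E, μ (μ x y z) u v = μ x (μ u z y) v) ∧
  (∀ x y z u v : E, μ x (μ u z y) v = μ x y (μ z u v))

/-- A (right) basic triple `(E, A, ⟪·,·⟫)`: a right module `E` over a complex
`*`-algebra `A`, together with an `A`-valued pairing which is conjugate-linear
in the first variable and linear in the second one, compatible with the module
structure and the involution. -/
structure BasicTriple (E A : Type*) [AddCommGroup E] [Module ℂ E]
    [NonUnitalRing A] [Module ℂ A] [StarRing A] where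
  act : E → A → E
  inner : E → E → A
  act_add_left : ∀ (x y : E) (a : A), act (x + y) a = act x a + act y a
  act_add_right : ∀ (x : E) (a b : A), act x (a + b) = act x a + act x b
  act_smul_left : ∀ (c : ℂ) (x : E) (a : A), act (c • x) a = c • act x a
  act_smul_right : ∀ (c : ℂ) (x : E) (a : A), act x (c • a) = c • act x a
  act_mul : ∀ (x : E) (a b : A), act (act x a) b = act x (a * b)
  inner_add_left : ∀ x y z : E, inner (x + y) z = inner x z + inner y z
  inner_add_right : ∀ x y z : E, inner x (y + z) = inner x y + inner x z
  inner_smul_left : ∀ (c : ℂ) (x y : E), inner (c • x) y = conj c • inner x y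
  inner_smul_right : ∀ (c : ℂ) (x y : E), inner x (c • y) = c • inner x y
  inner_mul : ∀ (x y : E) (a : A), inner x y * a = inner x (act y a)
  star_inner : ∀ x y : E, star (inner x y) = inner y x

variable {E A : Type*} [AddCommGroup E] [Module ℂ E]
    [NonUnitalRing A] [Module ℂ A] [StarRing A]

/-- The ternary product associated with a basic triple: `μ(x,y,z) = x⟪y,z⟫`. -/
def BasicTriple.mu (t : BasicTriple E A) (x y z : E) : E := t.act x (t.inner y z)

/-- The basic triple is full: `A = span{⟪x,y⟫ : x, y ∈ E}`. -/
def BasicTriple.Full (t : BasicTriple E A) : Prop :=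
  Submodule.span ℂ {a : A | ∃ x y : E, t.inner x y = a} = ⊤

/-- `E` is a faithful `A`-module. -/
def BasicTriple.Faithful (t : BasicTriple E A) : Prop :=
  ∀ a : A, (∀ x : E, t.act x a = 0) → a = 0

/-- A `C*`-seminorm on a `*`-tring `(E, μ)`. -/
def IsCStarSeminormTring {E : Type*} [AddCommGroup E] [Module ℂ E]
    (μ : E → E → E → E) (γ : E → ℝ) : Prop :=
  (∀ x y : E, γ (x + y) ≤ γ x + γ y) ∧
  (∀ (c : ℂ) (x : E), γ (c • x) = ‖c‖ * γ x) ∧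
  (∀ x y z : E, γ (μ x y z) ≤ γ x * γ y * γ z) ∧
  (∀ x : E, γ (μ x x x) = (γ x) ^ 3)

/-- A `C*`-seminorm on a complex `*`-algebra `A`. -/
def IsCStarSeminormAlg {A : Type*} [NonUnitalRing A] [Module ℂ A] [StarRing A]
    (α : A → ℝ) : Prop :=
  (∀ a b : A, α (a + b) ≤ α a + α b) ∧
  (∀ (c : ℂ) (a : A), α (c • a) = ‖c‖ * α a) ∧
  (∀ a b : A, α (a * b) ≤ α a * α b) ∧
  (∀ a : A, α (star a * a) = (α a) ^ 2)

/-! The seminorm `γ` makes `E` a seminormed space, and fullness makes every right multiplication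
`R a : x ↦ x a` continuous, so `γʳ a` is the operator seminorm of `R a`. Since
`μ(xa, xa, xa) = μ(x(aa*), x, xa)`, the identity `γ(μ(y, y, y)) = γ(y)³` at `y = xa` yields
`γ(xa)² ≤ γ(x(aa*)) γ(x)`, that is `γʳ(a)² ≤ γʳ(aa*)`. Together with submultiplicativity this
forces `γʳ` to be invariant under the involution and to satisfy the `C*`-identity. -/

section StarMul

variable {S : Type*} [Mul S] [StarMul S] {α : S → ℝ}

lemma map_star_eq_of_sq_le_map_mul_star (hnonneg : ∀ a, 0 ≤ α a)
    (hmul : ∀ a b, α (a * b) ≤ α a * α b) (hsq : ∀ a, α a ^ 2 ≤ α (a * star a)) (a : S) :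
    α (star a) = α a := by
  have le_star (b : S) : α b ≤ α (star b) := by
    rcases (hnonneg b).eq_or_lt with hb | hb
    · exact hb ▸ hnonneg (star b)
    · refine le_of_mul_le_mul_left ?_ hb
      calc α b * α b = α b ^ 2 := (sq _).symm
        _ ≤ α (b * star b) := hsq b
        _ ≤ α b * α (star b) := hmul _ _
  exact le_antisymm (by simpa only [star_star] using le_star (star a)) (le_star a)

lemma map_star_mul_self_eq_sq_of_sq_le_map_mul_star (hnonneg : ∀ a, 0 ≤ α a)
    (hmul : ∀ a b, α (a * b) ≤ α a * α b) (hsq : ∀ a, α a ^ 2 ≤ α (a * star a)) (a : S) :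
    α (star a * a) = α a ^ 2 := by
  have map_star := map_star_eq_of_sq_le_map_mul_star hnonneg hmul hsq a
  refine le_antisymm ?_ ?_
  · simpa only [map_star, ← sq] using hmul (star a) a
  · simpa only [map_star, star_star] using hsq (star a)

end StarMul

lemma isLUB_opNorm {𝕜 V W : Type*} [NontriviallyNormedField 𝕜] [NormedAlgebra ℝ 𝕜]
    [SeminormedAddCommGroup V] [SeminormedAddCommGroup W] [NormedSpace 𝕜 V] [NormedSpace 𝕜 W]
    (f : V →L[𝕜] W) : IsLUB {s : ℝ | ∃ x : V, ‖x‖ ≤ 1 ∧ s = ‖f x‖} ‖f‖ := by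
  refine ⟨?_, fun C hC => ?_⟩
  · rintro _ ⟨x, hx, rfl⟩
    exact f.unit_le_opNorm x hx
  · have norm_apply_le (x : V) (hx : ‖x‖ ≤ 1) : ‖f x‖ ≤ C := hC ⟨x, hx, rfl⟩
    have C_nonneg : 0 ≤ C := (norm_nonneg (f 0)).trans (norm_apply_le 0 (by simp))
    exact ContinuousLinearMap.opNorm_le_of_unit_norm C_nonneg fun x hx => norm_apply_le x hx.le

namespace BasicTriple

section Algebra

variable (t : BasicTriple E A)

lemma act_zero (x : E) : t.act x 0 = 0 := by
  simpa only [zero_smul] using t.act_smul_right 0 x 0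

lemma inner_act_left (x y : E) (a : A) : t.inner (t.act x a) y = star a * t.inner x y := by
  rw [← t.star_inner y, ← t.inner_mul, star_mul, t.star_inner]

lemma mu_act_act (x y z : E) (a b : A) :
    t.mu (t.act x a) (t.act y b) z = t.mu (t.act x (a * star b)) y z := by
  simp only [mu, inner_act_left, act_mul, mul_assoc]

end Algebra

section Seminormed

variable {F : Type*} [SeminormedAddCommGroup F] [NormedSpace ℂ F] (t : BasicTriple F A)

lemma continuous_act (hfull : t.Full)
    (hmul : ∀ x y z : F, ‖t.mu x y z‖ ≤ ‖x‖ * ‖y‖ * ‖z‖) (a : A) :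
    Continuous fun x => t.act x a := by
  have ha : a ∈ Submodule.span ℂ {a : A | ∃ x y : F, t.inner x y = a} := hfull ▸ Submodule.mem_top
  induction ha using Submodule.span_induction with
  | mem _ hb =>
    obtain ⟨y, z, rfl⟩ := hb
    refine AddMonoidHomClass.continuous_of_bound
      (AddMonoidHom.mk' (fun x => t.act x (t.inner y z)) fun x x' => t.act_add_left x x' _)
      (‖y‖ * ‖z‖) fun x => ?_
    exact (hmul x y z).trans_eq (by ring)
  | zero => simpa only [act_zero] using continuous_const
  | add b c _ _ hb hc =>
    simp only [act_add_right]
    exact hb.add hc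
  | smul c b _ hb =>
    simp only [act_smul_right]
    exact hb.const_smul c

/-- The anti-representation of `A` by right multiplications on `F`, given that these are continuous.
The seminorm `γʳ` is the operator seminorm of `rightMul` when `γ` is the seminorm of `F`. -/
def rightMul (hcont : ∀ a, Continuous fun x => t.act x a) : A →ₗ[ℂ] F →L[ℂ] F where
  toFun a :=
    { toFun := fun x => t.act x a
      map_add' := fun x y => t.act_add_left x y a
      map_smul' := fun c x => t.act_smul_left c x a
      cont := hcont a }
  map_add' a b := ContinuousLinearMap.ext fun x => t.act_add_right x a b
  map_smul' c a := ContinuousLinearMap.ext fun x => t.act_smul_right c x a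

lemma sq_norm_act_le (hmul : ∀ x y z : F, ‖t.mu x y z‖ ≤ ‖x‖ * ‖y‖ * ‖z‖)
    (hcube : ∀ x : F, ‖t.mu x x x‖ = ‖x‖ ^ 3) (x : F) (a : A) :
    ‖t.act x a‖ ^ 2 ≤ ‖t.act x (a * star a)‖ * ‖x‖ := by
  rcases (norm_nonneg (t.act x a)).eq_or_lt with h | h
  · rw [← h, zero_pow two_ne_zero]
    positivity
  · refine le_of_mul_le_mul_right ?_ h
    calc ‖t.act x a‖ ^ 2 * ‖t.act x a‖ = ‖t.mu (t.act x a) (t.act x a) (t.act x a)‖ := by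
          rw [hcube, ← pow_succ]
      _ = ‖t.mu (t.act x (a * star a)) x (t.act x a)‖ := by rw [mu_act_act]
      _ ≤ ‖t.act x (a * star a)‖ * ‖x‖ * ‖t.act x a‖ := hmul _ _ _

variable (hcont : ∀ a, Continuous fun x => t.act x a)

lemma rightMul_mul (a b : A) :
    t.rightMul hcont (a * b) = (t.rightMul hcont b).comp (t.rightMul hcont a) :=
  ContinuousLinearMap.ext fun x => (t.act_mul x a b).symm

lemma norm_act_le (x : F) (a : A) : ‖t.act x a‖ ≤ ‖x‖ * ‖t.rightMul hcont a‖ :=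
  ((t.rightMul hcont a).le_opNorm x).trans_eq (mul_comm _ _)

lemma norm_rightMul_mul_le (a b : A) :
    ‖t.rightMul hcont (a * b)‖ ≤ ‖t.rightMul hcont a‖ * ‖t.rightMul hcont b‖ := by
  rw [rightMul_mul, mul_comm]
  exact ContinuousLinearMap.opNorm_comp_le _ _

lemma sq_norm_rightMul_le (hmul : ∀ x y z : F, ‖t.mu x y z‖ ≤ ‖x‖ * ‖y‖ * ‖z‖)
    (hcube : ∀ x : F, ‖t.mu x x x‖ = ‖x‖ ^ 3) (a : A) :
    ‖t.rightMul hcont a‖ ^ 2 ≤ ‖t.rightMul hcont (a * star a)‖ := by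
  rw [← Real.le_sqrt (norm_nonneg _) (norm_nonneg _)]
  refine ContinuousLinearMap.opNorm_le_bound _ (Real.sqrt_nonneg _) fun x => ?_
  refine le_of_sq_le_sq ?_ (by positivity)
  calc ‖t.act x a‖ ^ 2 ≤ ‖t.act x (a * star a)‖ * ‖x‖ := t.sq_norm_act_le hmul hcube x a
    _ ≤ ‖x‖ * ‖t.rightMul hcont (a * star a)‖ * ‖x‖ := by
      gcongr
      exact t.norm_act_le hcont x _
    _ = (√‖t.rightMul hcont (a * star a)‖ * ‖x‖) ^ 2 := by
      rw [mul_pow, Real.sq_sqrt (norm_nonneg _)]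
      ring

lemma isCStarSeminormAlg_norm_rightMul
    (hmul : ∀ x y z : F, ‖t.mu x y z‖ ≤ ‖x‖ * ‖y‖ * ‖z‖)
    (hcube : ∀ x : F, ‖t.mu x x x‖ = ‖x‖ ^ 3) :
    IsCStarSeminormAlg fun a => ‖t.rightMul hcont a‖ :=
  ⟨fun a b => (congrArg norm (map_add _ a b)).trans_le (norm_add_le _ _),
    fun c a => (congrArg norm (map_smul _ c a)).trans (norm_smul _ _),
    t.norm_rightMul_mul_le hcont,
    map_star_mul_self_eq_sq_of_sq_le_map_mul_star (fun _ => norm_nonneg _)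
      (t.norm_rightMul_mul_le hcont) (t.sq_norm_rightMul_le hcont hmul hcube)⟩

lemma norm_rightMul_inner_le (hmul : ∀ x y z : F, ‖t.mu x y z‖ ≤ ‖x‖ * ‖y‖ * ‖z‖) (x y : F) :
    ‖t.rightMul hcont (t.inner x y)‖ ≤ ‖x‖ * ‖y‖ :=
  ContinuousLinearMap.opNorm_le_bound _ (by positivity) fun z =>
    (hmul z x y).trans_eq (by ring)

lemma sq_norm_eq_norm_rightMul_inner_self
    (hmul : ∀ x y z : F, ‖t.mu x y z‖ ≤ ‖x‖ * ‖y‖ * ‖z‖)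
    (hcube : ∀ x : F, ‖t.mu x x x‖ = ‖x‖ ^ 3) (x : F) :
    ‖x‖ ^ 2 = ‖t.rightMul hcont (t.inner x x)‖ := by
  refine le_antisymm ?_ (by simpa only [sq] using t.norm_rightMul_inner_le hcont hmul x x)
  rcases (norm_nonneg x).eq_or_lt with hx | hx
  · rw [← hx, zero_pow two_ne_zero]
    exact norm_nonneg _
  · refine le_of_mul_le_mul_left ?_ hx
    calc ‖x‖ * ‖x‖ ^ 2 = ‖t.mu x x x‖ := by rw [hcube, ← pow_succ']
      _ ≤ ‖x‖ * ‖t.rightMul hcont (t.inner x x)‖ := t.norm_act_le hcont x _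

lemma norm_rightMul_eq_zero_imp_iff
    (hmul : ∀ x y z : F, ‖t.mu x y z‖ ≤ ‖x‖ * ‖y‖ * ‖z‖)
    (hcube : ∀ x : F, ‖t.mu x x x‖ = ‖x‖ ^ 3) (hfaith : t.Faithful)
    (hadm : ∀ x : F, t.mu x x x = 0 → x = 0) :
    (∀ a : A, ‖t.rightMul hcont a‖ = 0 → a = 0) ↔ ∀ x : F, ‖x‖ = 0 → x = 0 := by
  constructor
  · intro hnorm x hx
    have inner_self : t.inner x x = 0 := hnorm _ <| by
      rw [← t.sq_norm_eq_norm_rightMul_inner_self hcont hmul hcube, hx, zero_pow two_ne_zero]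
    exact hadm x (by rw [mu, inner_self, act_zero])
  · intro hnorm a ha
    have norm_act_le_zero (x : F) : ‖t.act x a‖ ≤ 0 := by
      simpa only [ha, mul_zero] using t.norm_act_le hcont x a
    exact hfaith a fun x => hnorm _ ((norm_act_le_zero x).antisymm (norm_nonneg _))

end Seminormed

end BasicTriple

/-- Let `(E, A, ⟪·,·⟫)` be a full basic triple whose
associated `*`-tring is admissible and such that `E` is a faithful `A`-module,
and let `γ` be a `C*`-seminorm on `E`.  Then
`γʳ(a) := sup{γ(xa) : γ(x) ≤ 1}` is finite for every `a` (expressed below by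
saying that `γʳ a` is the least upper bound of the relevant set of reals),
`γʳ` is a `C*`-seminorm on `A`, the displayed inequalities hold, and `γʳ` is a
norm iff `γ` is a norm. -/
theorem stmt_6 {E A : Type*} [AddCommGroup E] [Module ℂ E]
    [NonUnitalRing A] [Module ℂ A] [StarRing A] [StarModule ℂ A]
    [IsScalarTower ℂ A A] [SMulCommClass ℂ A A]
    (t : BasicTriple E A) (hfull : t.Full) (hfaith : t.Faithful)
    (hadm : ∀ x : E, t.mu x x x = 0 → x = 0)
    (γ : E → ℝ) (hγ : IsCStarSeminormTring t.mu γ) :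
    ∃ γr : A → ℝ,
      (∀ a : A, IsLUB {s : ℝ | ∃ x : E, γ x ≤ 1 ∧ s = γ (t.act x a)} (γr a)) ∧
      IsCStarSeminormAlg γr ∧
      (∀ (x : E) (a : A), γ (t.act x a) ≤ γ x * γr a) ∧
      (∀ x y : E, γr (t.inner x y) ≤ γ x * γ y) ∧
      (∀ x : E, (γ x) ^ 2 = γr (t.inner x x)) ∧
      ((∀ a : A, γr a = 0 → a = 0) ↔ (∀ x : E, γ x = 0 → x = 0)) := by
  obtain ⟨hadd, hsmul, hmul, hcube⟩ := hγ
  let p := Seminorm.of γ hadd hsmul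
  let : Norm E := ⟨γ⟩
  have core : SeminormedSpace.Core ℂ E := ⟨apply_nonneg p, hsmul, hadd⟩
  let : SeminormedAddCommGroup E := .ofCore core
  let : NormedSpace ℂ E := { norm_smul_le := fun c x => (hsmul c x).le }
  have hcont := t.continuous_act hfull hmul
  exact ⟨fun a => ‖t.rightMul hcont a‖,
    fun a => isLUB_opNorm (t.rightMul hcont a),
    t.isCStarSeminormAlg_norm_rightMul hcont hmul hcube,
    t.norm_act_le hcont,
    t.norm_rightMul_inner_le hcont hmul,
    t.sq_norm_eq_norm_rightMul_inner_self hcont hmul hcube,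
    t.norm_rightMul_eq_zero_imp_iff hcont hmul hcube hfaith hadm⟩
end
end

section
/- Let A be a Banach *-algebra and I a *-ideal of A, not necessarily closed. Then any C*-seminorm on I can be extended to a C*-seminorm on A. If I is dense in A, such an extension is unique. -/
noncomputable section

open scoped ComplexConjugate

/-!
The quasi-inverse in `A` of an element of the ideal `I` lies in `I`, so elements of `I` have
quasispectrum in `I` bounded by their norm. Gelfand's formula, applied to left multiplication by
`star x * x` on `(I, α)`, then gives `α x ^ 2 = α (star x * x) ≤ ‖x‖ ^ 2`. For `b` self-adjoint,
iterating `α (b * x) ^ 2 ≤ α x * α (b * b * x)` and using `α (b * x) ≤ ‖b‖ * ‖x‖` to control the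
last factor yields `α (b * x) ≤ ‖b‖ * α x`. So `A` acts on `(I, α)` by bounded left
multiplications, and their operator norm is the extension. The case `I = A` of the first estimate
makes every `C*`-seminorm on `A` continuous, hence determined by its values on a dense ideal.
-/

open Filter Topology UniformSpace

lemma le_of_pow_two_pow_le_mul {a b K : ℝ} (hb : 0 ≤ b)
    (h : ∀ n : ℕ, a ^ 2 ^ n ≤ K * b ^ 2 ^ n) : a ≤ b := by
  by_contra! hlt
  have ha : 0 < a := hb.trans_lt hlt
  have hone : ∀ n : ℕ, 1 ≤ K * (b / a) ^ 2 ^ n := fun n ↦ by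
    rw [div_pow, mul_div_assoc', one_le_div (by positivity)]
    exact h n
  have hlim : Tendsto (fun n : ℕ ↦ K * (b / a) ^ 2 ^ n) atTop (𝓝 (K * 0)) :=
    ((tendsto_pow_atTop_nhds_zero_of_lt_one (by positivity) ((div_lt_one ha).2 hlt)).comp
      (tendsto_pow_atTop_atTop_of_one_lt one_lt_two)).const_mul K
  linarith [ge_of_tendsto' hlim hone]

section SpectralRadius

lemma spectralRadius_eq_nnnorm_of_norm_pow_two_pow {D : Type*} [NormedRing D]
    [NormedAlgebra ℂ D] [CompleteSpace D] {a : D} (h : ∀ n : ℕ, ‖a ^ 2 ^ n‖ = ‖a‖ ^ 2 ^ n) :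
    spectralRadius ℂ a = ‖a‖₊ := by
  refine tendsto_nhds_unique
    ((spectrum.pow_nnnorm_pow_one_div_tendsto_nhds_spectralRadius a).comp
      (tendsto_pow_atTop_atTop_of_one_lt one_lt_two)) (tendsto_const_nhds.congr fun n ↦ ?_)
  have hn : ‖a ^ 2 ^ n‖₊ = ‖a‖₊ ^ 2 ^ n := NNReal.eq (h n)
  rw [Function.comp_apply, hn, ENNReal.coe_pow, ← ENNReal.rpow_natCast, ← ENNReal.rpow_mul]
  simp

lemma norm_le_of_norm_pow_two_pow_of_spectrum {R : Type*} [SeminormedRing R] [NormedAlgebra ℂ R]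
    {a : R} (h : ∀ n : ℕ, ‖a ^ 2 ^ n‖ = ‖a‖ ^ 2 ^ n) {r : ℝ} (hr₀ : 0 ≤ r)
    (hr : ∀ z ∈ spectrum ℂ a, ‖z‖ ≤ r) : ‖a‖ ≤ r := by
  let _ : NormedAlgebra ℂ (Completion R) :=
    { Completion.algebra R ℂ with norm_smul_le := norm_smul_le }
  let ι : R →ₐ[ℂ] Completion R := { Completion.coeRingHom with commutes' := fun _ ↦ rfl }
  have hι : ∀ x : R, ‖ι x‖ = ‖x‖ := Completion.norm_coe
  have hrad : spectralRadius ℂ (ι a) = ‖ι a‖₊ :=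
    spectralRadius_eq_nnnorm_of_norm_pow_two_pow fun n ↦ by rw [← map_pow, hι, hι, h]
  have hle : spectralRadius ℂ (ι a) ≤ r.toNNReal := iSup₂_le fun z hz ↦
    ENNReal.coe_le_coe.2 (NNReal.le_toNNReal_of_coe_le (hr z (AlgHom.spectrum_apply_subset ι a hz)))
  rw [hrad, ENNReal.coe_le_coe] at hle
  rw [← hι, ← coe_nnnorm, ← Real.coe_toNNReal r hr₀]
  exact hle

end SpectralRadius

section Quasispectrum

lemma isQuasiregular_of_coe {A S : Type*} [NonUnitalRing A] [SetLike S A]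
    [NonUnitalSubringClass S A] {J : S} (hJ : ∀ (a : A), ∀ x ∈ J, a * x ∈ J) {x : J}
    (hx : IsQuasiregular (x : A)) : IsQuasiregular x := by
  obtain ⟨y, hxy, hyx⟩ := isQuasiregular_iff.1 hx
  have hy : y = -(x + y * x) := by
    rw [eq_neg_iff_add_eq_zero, ← hyx]
    abel
  have hyJ : y ∈ J := hy ▸ neg_mem (add_mem x.2 (hJ y x x.2))
  exact isQuasiregular_iff.2 ⟨⟨y, hyJ⟩, Subtype.ext hxy, Subtype.ext hyx⟩

lemma quasispectrum_subset_quasispectrum_coe {R A : Type*} [CommRing R] [NonUnitalRing A]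
    [Module R A] {J : NonUnitalSubalgebra R A} (hJ : ∀ (a : A), ∀ x ∈ J, a * x ∈ J) (x : J) :
    quasispectrum R x ⊆ quasispectrum R (x : A) :=
  fun _ hz hunit hreg ↦ hz hunit (isQuasiregular_of_coe hJ hreg)

lemma norm_le_norm_of_mem_quasispectrum {𝕜 A : Type*} [NontriviallyNormedField 𝕜]
    [NonUnitalNormedRing A] [NormedSpace 𝕜 A] [CompleteSpace A] [IsScalarTower 𝕜 A A]
    [SMulCommClass 𝕜 A A] [CompleteSpace 𝕜] {a : A} {z : 𝕜} (hz : z ∈ quasispectrum 𝕜 a) :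
    ‖z‖ ≤ ‖a‖ := by
  rw [Unitization.quasispectrum_eq_spectrum_inr' 𝕜 𝕜,
    ← AlgEquiv.spectrum_eq (WithLp.unitizationAlgEquiv 𝕜).symm (a : Unitization 𝕜 A)] at hz
  have hone : ‖(1 : WithLp 1 (Unitization 𝕜 A))‖ = 1 := by
    rw [WithLp.unitization_norm_def]
    change ‖(1 : 𝕜)‖ + ‖(0 : A)‖ = 1
    simp
  calc ‖z‖ ≤ ‖(WithLp.unitizationAlgEquiv 𝕜).symm (a : Unitization 𝕜 A)‖ * ‖(1 : WithLp 1 _)‖ :=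
      spectrum.norm_le_norm_mul_of_mem hz
    _ = ‖a‖ := by
      rw [hone, mul_one]
      exact WithLp.unitization_norm_inr a

end Quasispectrum

lemma le_of_sq_le_mul_self {a c : ℝ} (hc : 0 ≤ c) (h : a ^ 2 ≤ c * a) : a ≤ c := by
  by_contra! hlt
  nlinarith

namespace IsCStarSeminormAlg

section Algebraic

variable {B : Type*} [NonUnitalRing B] [Module ℂ B] [StarRing B] {α : B → ℝ}

/-- The seminorm underlying a `C*`-seminorm. -/
def toSeminorm (hα : IsCStarSeminormAlg α) : Seminorm ℂ B := Seminorm.of α hα.1 hα.2.1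

/-- A `C*`-seminorm regarded as the norm of its algebra. This is not an instance, as the algebra
may already carry another norm. -/
abbrev toNonUnitalSeminormedRing (hα : IsCStarSeminormAlg α) : NonUnitalSeminormedRing B where
  __ := ‹NonUnitalRing B›
  __ := hα.toSeminorm.toAddGroupSeminorm.toSeminormedAddCommGroup
  norm_mul_le := hα.2.2.1

lemma nonneg (hα : IsCStarSeminormAlg α) (x : B) : 0 ≤ α x := apply_nonneg hα.toSeminorm x

lemma of_sq_le (hadd : ∀ x y, α (x + y) ≤ α x + α y) (hsmul : ∀ (c : ℂ) x, α (c • x) = ‖c‖ * α x)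
    (hmul : ∀ x y, α (x * y) ≤ α x * α y) (hsq : ∀ x, α x ^ 2 ≤ α (star x * x)) :
    IsCStarSeminormAlg α := by
  have hnonneg (x : B) : 0 ≤ α x := apply_nonneg (Seminorm.of α hadd hsmul) x
  have hstar (x : B) : α x ≤ α (star x) :=
    le_of_sq_le_mul_self (hnonneg _) ((hsq x).trans (hmul _ _))
  refine ⟨hadd, hsmul, hmul, fun x ↦ (hsq x).antisymm' ?_⟩
  calc α (star x * x) ≤ α (star x) * α x := hmul _ _
    _ ≤ α x * α x := by
      gcongr
      · exact hnonneg x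
      · simpa using hstar (star x)
    _ = α x ^ 2 := (sq _).symm

lemma apply_star (hα : IsCStarSeminormAlg α) (x : B) : α (star x) = α x := by
  have hle (y : B) : α y ≤ α (star y) :=
    le_of_sq_le_mul_self (hα.nonneg _) ((hα.2.2.2 y).symm.trans_le (hα.2.2.1 _ _))
  exact le_antisymm (by simpa using hle (star x)) (hle x)

end Algebraic

section LeftRegular

variable {B : Type*} [NonUnitalSeminormedRing B] [NormedSpace ℂ B] [IsScalarTower ℂ B B]
  [SMulCommClass ℂ B B] [StarRing B]

lemma norm_mul_apply (hB : IsCStarSeminormAlg (norm : B → ℝ)) (b : B) :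
    ‖ContinuousLinearMap.mul ℂ B b‖ = ‖b‖ := by
  refine (ContinuousLinearMap.opNorm_mul_apply_le ℂ B b).antisymm
    (le_of_sq_le_mul_self (norm_nonneg _) ?_)
  calc ‖b‖ ^ 2 = ‖b * star b‖ := by simpa [hB.apply_star] using (hB.2.2.2 (star b)).symm
    _ ≤ ‖ContinuousLinearMap.mul ℂ B b‖ * ‖star b‖ :=
      (ContinuousLinearMap.mul ℂ B b).le_opNorm (star b)
    _ = ‖ContinuousLinearMap.mul ℂ B b‖ * ‖b‖ := by rw [hB.apply_star]

lemma norm_mul_apply_pow_two_pow (hB : IsCStarSeminormAlg (norm : B → ℝ)) {b : B}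
    (hb : IsSelfAdjoint b) (n : ℕ) :
    ‖ContinuousLinearMap.mul ℂ B b ^ 2 ^ n‖ = ‖ContinuousLinearMap.mul ℂ B b‖ ^ 2 ^ n := by
  induction n generalizing b with
  | zero => simp
  | succ n ih =>
    have hsq : ContinuousLinearMap.mul ℂ B b ^ 2 = ContinuousLinearMap.mul ℂ B (b * b) := by
      rw [sq]
      exact (map_mul (NonUnitalAlgHom.Lmul ℂ B) b b).symm
    have hbb : ‖b * b‖ = ‖b‖ ^ 2 := by simpa [hb.star_eq] using hB.2.2.2 b
    have hself : IsSelfAdjoint (b * b) := by simpa [hb.star_eq] using IsSelfAdjoint.star_mul_self b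
    rw [pow_succ', pow_mul, hsq, ih hself, hB.norm_mul_apply, hB.norm_mul_apply, hbb, ← pow_mul]

end LeftRegular

theorem le_of_forall_mem_quasispectrum {B : Type*} [NonUnitalRing B] [Module ℂ B]
    [IsScalarTower ℂ B B] [SMulCommClass ℂ B B] [StarRing B] {α : B → ℝ}
    (hα : IsCStarSeminormAlg α) {b : B} (hb : IsSelfAdjoint b) {r : ℝ}
    (hr : ∀ z ∈ quasispectrum ℂ b, ‖z‖ ≤ r) : α b ≤ r := by
  let _ := hα.toNonUnitalSeminormedRing
  let _ : NormedSpace ℂ B := { norm_smul_le c x := (hα.2.1 c x).le }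
  have hspec (z : ℂ) (hz : z ∈ spectrum ℂ (ContinuousLinearMap.mul ℂ B b)) : ‖z‖ ≤ r :=
    hr z (NonUnitalAlgHom.quasispectrum_apply_subset (NonUnitalAlgHom.Lmul ℂ B) b
      (spectrum_subset_quasispectrum ℂ _ hz))
  have hr₀ : 0 ≤ r := (norm_nonneg _).trans (hr 0 (quasispectrum.zero_mem ℂ b))
  calc α b = ‖ContinuousLinearMap.mul ℂ B b‖ := (norm_mul_apply hα b).symm
    _ ≤ r := norm_le_of_norm_pow_two_pow_of_spectrum (norm_mul_apply_pow_two_pow hα hb) hr₀ hspec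

section Banach

variable {A : Type*} [NonUnitalNormedRing A] [NormedSpace ℂ A] [CompleteSpace A] [StarRing A]
  [NormedStarGroup A] [IsScalarTower ℂ A A] [SMulCommClass ℂ A A]

theorem le_norm_apply {B : Type*} [NonUnitalRing B] [Module ℂ B] [IsScalarTower ℂ B B]
    [SMulCommClass ℂ B B] [StarRing B] {α : B → ℝ} (hα : IsCStarSeminormAlg α) (f : B →⋆ₙₐ[ℂ] A)
    (hf : ∀ b, quasispectrum ℂ b ⊆ quasispectrum ℂ (f b)) (b : B) : α b ≤ ‖f b‖ := by
  refine (sq_le_sq₀ (hα.nonneg b) (norm_nonneg _)).1 ?_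
  calc α b ^ 2 = α (star b * b) := (hα.2.2.2 b).symm
    _ ≤ ‖f (star b * b)‖ :=
      hα.le_of_forall_mem_quasispectrum (.star_mul_self b) fun _ hz ↦
        norm_le_norm_of_mem_quasispectrum (hf _ hz)
    _ ≤ ‖star (f b)‖ * ‖f b‖ := by
      rw [map_mul, map_star]
      exact norm_mul_le _ _
    _ = ‖f b‖ ^ 2 := by rw [norm_star, sq]

theorem continuous {β : A → ℝ} (hβ : IsCStarSeminormAlg β) : Continuous β :=
  Seminorm.continuous_of_le (p := hβ.toSeminorm) (q := normSeminorm ℂ A) continuous_norm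
    fun a ↦ hβ.le_norm_apply (.id ℂ A) (fun _ ↦ subset_rfl) a

end Banach

end IsCStarSeminormAlg

/-- The map `L` is a multiplicative action of `A` on `B` in which `L (star a)` is adjoint to `L a`
for the `B`-valued form `(x, y) ↦ star x * y`, as is the left multiplication of `A` on a
`*`-ideal. -/
structure IsStarAction {A B : Type*} [Mul A] [Star A] [Mul B] [Star B] (L : A → B → B) : Prop where
  mul_apply (a b : A) (x : B) : L (a * b) x = L a (L b x)
  star_apply_mul (a : A) (x y : B) : star (L a x) * y = star x * L (star a) y

namespace IsStarAction

lemma sq_apply_le {A B : Type*} [Mul A] [Star A] [NonUnitalRing B] [Module ℂ B] [StarRing B]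
    {L : A → B → B} (hL : IsStarAction L) {α : B → ℝ} (hα : IsCStarSeminormAlg α) (a : A) (x : B) :
    α (L a x) ^ 2 ≤ α x * α (L (star a * a) x) := by
  calc α (L a x) ^ 2 = α (star x * L (star a * a) x) := by
        rw [← hα.2.2.2, hL.star_apply_mul, hL.mul_apply]
    _ ≤ α x * α (L (star a * a) x) := (hα.2.2.1 _ _).trans_eq (by rw [hα.apply_star])

section Contractive

variable {A B : Type*} [NonUnitalSeminormedRing A] [StarRing A] [NonUnitalRing B] [Module ℂ B]
  [StarRing B] {L : A → B → B} {α : B → ℝ} {x : B} {K : ℝ}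

lemma mul_pow_two_pow_le (hL : IsStarAction L) (hα : IsCStarSeminormAlg α) (hK₀ : 0 ≤ K)
    (hK : ∀ a, α (L a x) ≤ K * ‖a‖) {b : A} (hb : IsSelfAdjoint b) (n : ℕ) :
    α x * α (L b x) ^ 2 ^ n ≤ K * (α x * ‖b‖) ^ 2 ^ n := by
  have hx := hα.nonneg x
  induction n generalizing b with
  | zero => simpa [mul_left_comm] using mul_le_mul_of_nonneg_left (hK b) hx
  | succ n ih =>
    have hself : IsSelfAdjoint (b * b) := by simpa [hb.star_eq] using IsSelfAdjoint.star_mul_self b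
    have hsq : α (L b x) ^ 2 ≤ α x * α (L (b * b) x) := by
      simpa [hb.star_eq] using hL.sq_apply_le hα b x
    calc α x * α (L b x) ^ 2 ^ (n + 1) = α x * (α (L b x) ^ 2) ^ 2 ^ n := by
          rw [pow_succ', pow_mul]
      _ ≤ α x * (α x * α (L (b * b) x)) ^ 2 ^ n := by gcongr
      _ = α x ^ 2 ^ n * (α x * α (L (b * b) x) ^ 2 ^ n) := by ring
      _ ≤ α x ^ 2 ^ n * (K * (α x * ‖b * b‖) ^ 2 ^ n) :=
        mul_le_mul_of_nonneg_left (ih hself) (by positivity)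
      _ ≤ α x ^ 2 ^ n * (K * (α x * (‖b‖ * ‖b‖)) ^ 2 ^ n) := by
        gcongr
        exact norm_mul_le b b
      _ = K * (α x * ‖b‖) ^ 2 ^ (n + 1) := by ring

lemma apply_le_of_isSelfAdjoint (hL : IsStarAction L) (hα : IsCStarSeminormAlg α) (hK₀ : 0 ≤ K)
    (hK : ∀ a, α (L a x) ≤ K * ‖a‖) {b : A} (hb : IsSelfAdjoint b) :
    α (L b x) ≤ α x * ‖b‖ := by
  rcases (hα.nonneg x).eq_or_lt with hx | hx
  · have hsq : α (L b x) ^ 2 ≤ 0 := by simpa [← hx] using hL.sq_apply_le hα b x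
    simp [← hx, pow_eq_zero_iff two_ne_zero |>.1 (hsq.antisymm (sq_nonneg _))]
  · refine le_of_pow_two_pow_le_mul (K := K / α x) (by positivity) fun n ↦ ?_
    rw [div_mul_eq_mul_div, le_div_iff₀' hx]
    exact hL.mul_pow_two_pow_le hα hK₀ hK hb n

theorem apply_le [NormedStarGroup A] (hL : IsStarAction L) (hα : IsCStarSeminormAlg α) (hK₀ : 0 ≤ K)
    (hK : ∀ a, α (L a x) ≤ K * ‖a‖) (a : A) : α (L a x) ≤ ‖a‖ * α x := by
  have hx := hα.nonneg x
  refine (sq_le_sq₀ (hα.nonneg _) (by positivity)).1 ?_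
  calc α (L a x) ^ 2 ≤ α x * α (L (star a * a) x) := hL.sq_apply_le hα a x
    _ ≤ α x * (α x * ‖star a * a‖) := by
      gcongr
      exact hL.apply_le_of_isSelfAdjoint hα hK₀ hK (.star_mul_self a)
    _ ≤ α x * (α x * (‖star a‖ * ‖a‖)) := by
      gcongr
      exact norm_mul_le _ _
    _ = (‖a‖ * α x) ^ 2 := by
      rw [norm_star]
      ring

end Contractive

theorem isCStarSeminormAlg_norm {A B : Type*} [NonUnitalRing A] [Module ℂ A] [StarRing A]
    [NonUnitalSeminormedRing B] [NormedSpace ℂ B] [StarRing B] {L : A →ₙₐ[ℂ] (B →L[ℂ] B)}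
    (hL : IsStarAction fun a ↦ ⇑(L a)) (hB : IsCStarSeminormAlg (norm : B → ℝ)) :
    IsCStarSeminormAlg fun a ↦ ‖L a‖ := by
  refine .of_sq_le (fun a b ↦ ?_) (fun c a ↦ ?_) (fun a b ↦ ?_) fun a ↦ ?_
  · rw [map_add]
    exact norm_add_le _ _
  · rw [map_smul, norm_smul]
  · rw [map_mul]
    exact norm_mul_le _ _
  · have hbound (x : B) : ‖L a x‖ ≤ √‖L (star a * a)‖ * ‖x‖ := by
      rw [← Real.sqrt_sq (norm_nonneg x), ← Real.sqrt_mul (norm_nonneg _)]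
      apply Real.le_sqrt_of_sq_le
      calc ‖L a x‖ ^ 2 ≤ ‖x‖ * ‖L (star a * a) x‖ := hL.sq_apply_le hB a x
        _ ≤ ‖x‖ * (‖L (star a * a)‖ * ‖x‖) := by
          gcongr
          exact (L (star a * a)).le_opNorm x
        _ = ‖L (star a * a)‖ * ‖x‖ ^ 2 := by ring
    exact (Real.le_sqrt (norm_nonneg _) (norm_nonneg _)).1
      ((L a).opNorm_le_bound (Real.sqrt_nonneg _) hbound)

end IsStarAction

theorem IsCStarSeminormAlg.exists_of_isStarAction {A B : Type*} [NonUnitalSeminormedRing A]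
    [NormedSpace ℂ A] [StarRing A] [NormedStarGroup A] [NonUnitalRing B] [Module ℂ B]
    [IsScalarTower ℂ B B] [SMulCommClass ℂ B B] [StarRing B] {L : A →ₙₐ[ℂ] Module.End ℂ B}
    (hL : IsStarAction fun a ↦ ⇑(L a)) {α : B → ℝ} (hα : IsCStarSeminormAlg α)
    (hK : ∀ x, ∃ K, 0 ≤ K ∧ ∀ a, α (L a x) ≤ K * ‖a‖) :
    ∃ β : A → ℝ, IsCStarSeminormAlg β ∧ ∀ a b, (∀ x, L a x = b * x) → β a = α b := by
  let _ := hα.toNonUnitalSeminormedRing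
  let _ : NormedSpace ℂ B := { norm_smul_le c x := (hα.2.1 c x).le }
  have hcontr (a : A) (x : B) : ‖L a x‖ ≤ ‖a‖ * ‖x‖ :=
    let ⟨_, hK₀, hKx⟩ := hK x
    hL.apply_le hα hK₀ hKx a
  let T : A →ₙₐ[ℂ] (B →L[ℂ] B) :=
    { toFun a := (L a).mkContinuous ‖a‖ (hcontr a)
      map_smul' c a := by ext; simp
      map_zero' := by ext; simp
      map_add' a b := by ext; simp
      map_mul' a b := by ext; simp }
  refine ⟨fun a ↦ ‖T a‖, IsStarAction.isCStarSeminormAlg_norm (L := T) hL hα, fun a b hab ↦ ?_⟩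
  have hTa : T a = ContinuousLinearMap.mul ℂ B b := ContinuousLinearMap.ext hab
  exact (congrArg norm hTa).trans (norm_mul_apply hα b)

section Ideal

variable {A : Type*} [NonUnitalRing A] [Module ℂ A] [StarRing A] [IsScalarTower ℂ A A]
  [SMulCommClass ℂ A A] {J : NonUnitalStarSubalgebra ℂ A} (hJ : ∀ (a : A), ∀ x ∈ J, a * x ∈ J)

/-- Left multiplication of an algebra on a left ideal. -/
def idealLeftMul : A →ₙₐ[ℂ] Module.End ℂ J where
  toFun a :=
    { toFun x := ⟨a * x, hJ a x x.2⟩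
      map_add' x y := Subtype.ext (mul_add a (x : A) y)
      map_smul' c x := Subtype.ext (mul_smul_comm c a (x : A)) }
  map_smul' c a := LinearMap.ext fun x ↦ Subtype.ext (smul_mul_assoc c a (x : A))
  map_zero' := LinearMap.ext fun x ↦ Subtype.ext (zero_mul (x : A))
  map_add' a b := LinearMap.ext fun x ↦ Subtype.ext (add_mul a b (x : A))
  map_mul' a b := LinearMap.ext fun x ↦ Subtype.ext (mul_assoc a b (x : A))

lemma coe_idealLeftMul_apply (a : A) (x : J) : (idealLeftMul hJ a x : A) = a * x := rfl

lemma isStarAction_idealLeftMul : IsStarAction fun a ↦ ⇑(idealLeftMul hJ a) where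
  mul_apply a b x := by rw [map_mul]; rfl
  star_apply_mul a x y := Subtype.ext <| by simp [coe_idealLeftMul_apply, mul_assoc]

end Ideal

theorem IsCStarSeminormAlg.exists_extension {A : Type*} [NonUnitalNormedRing A] [NormedSpace ℂ A]
    [CompleteSpace A] [StarRing A] [NormedStarGroup A] [IsScalarTower ℂ A A] [SMulCommClass ℂ A A]
    {J : NonUnitalStarSubalgebra ℂ A} (hJ : ∀ (a : A), ∀ x ∈ J, a * x ∈ J) {α : J → ℝ}
    (hα : IsCStarSeminormAlg α) :
    ∃ β : A → ℝ, IsCStarSeminormAlg β ∧ ∀ x : J, β x = α x := by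
  have hle (x : J) : α x ≤ ‖(x : A)‖ :=
    hα.le_norm_apply (NonUnitalStarSubalgebraClass.subtype J)
      (quasispectrum_subset_quasispectrum_coe hJ) x
  obtain ⟨β, hβ, hβα⟩ := hα.exists_of_isStarAction (isStarAction_idealLeftMul hJ) fun x ↦
    ⟨‖(x : A)‖, norm_nonneg _, fun a ↦ (hle _).trans ((norm_mul_le _ _).trans_eq (mul_comm _ _))⟩
  exact ⟨β, hβ, fun x ↦ hβα x x fun _ ↦ rfl⟩

/-- Let `A` be a Banach `*`-algebra and `I` a `*`-ideal of
`A`, not necessarily closed.  Then any `C*`-seminorm on `I` extends to a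
`C*`-seminorm on `A`, and if `I` is dense the extension is unique. -/
theorem stmt_11 {A : Type*} [NonUnitalNormedRing A] [NormedSpace ℂ A]
    [CompleteSpace A] [StarRing A] [NormedStarGroup A] [StarModule ℂ A]
    [IsScalarTower ℂ A A] [SMulCommClass ℂ A A]
    (I : Set A) (hzero : (0 : A) ∈ I)
    (hadd : ∀ x ∈ I, ∀ y ∈ I, x + y ∈ I)
    (hsmul : ∀ (c : ℂ), ∀ x ∈ I, c • x ∈ I)
    (hstar : ∀ x ∈ I, star x ∈ I)
    (hmull : ∀ (a : A), ∀ x ∈ I, a * x ∈ I)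
    (hmulr : ∀ (a : A), ∀ x ∈ I, x * a ∈ I)
    (α : A → ℝ)
    (hα_add : ∀ x ∈ I, ∀ y ∈ I, α (x + y) ≤ α x + α y)
    (hα_smul : ∀ (c : ℂ), ∀ x ∈ I, α (c • x) = ‖c‖ * α x)
    (hα_mul : ∀ x ∈ I, ∀ y ∈ I, α (x * y) ≤ α x * α y)
    (hα_star : ∀ x ∈ I, α (star x * x) = (α x) ^ 2) :
    (∃ β : A → ℝ, IsCStarSeminormAlg β ∧ ∀ x ∈ I, β x = α x) ∧
    (Dense I → ∀ β β' : A → ℝ, IsCStarSeminormAlg β → (∀ x ∈ I, β x = α x) →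
      IsCStarSeminormAlg β' → (∀ x ∈ I, β' x = α x) → β = β') := by
  let J : NonUnitalStarSubalgebra ℂ A :=
    { carrier := I
      zero_mem' := hzero
      add_mem' := fun hx hy ↦ hadd _ hx _ hy
      smul_mem' := fun c _ hx ↦ hsmul c _ hx
      mul_mem' := fun _ hy ↦ hmull _ _ hy
      star_mem' := fun hx ↦ hstar _ hx }
  have hα : IsCStarSeminormAlg fun x : J ↦ α x :=
    ⟨fun x y ↦ hα_add x x.2 y y.2, fun c x ↦ hα_smul c x x.2, fun x y ↦ hα_mul x x.2 y y.2,
      fun x ↦ hα_star x x.2⟩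
  constructor
  · obtain ⟨β, hβ, hβα⟩ := hα.exists_extension hmull
    exact ⟨β, hβ, fun x hx ↦ hβα ⟨x, hx⟩⟩
  · intro hI β β' hβ hβα hβ' hβα'
    exact hβ.continuous.ext_on hI hβ'.continuous fun x hx ↦ (hβα x hx).trans (hβα' x hx).symm
end
end
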